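/- For every integer n ≥ 2 and every real ρ > 0, C(ρ) = (2/(n-1)) S_{n,4}(ρ) + 3 S_{n,3}(ρ) + (n-1) S_{n,2}(ρ) = n(n+1) e^{-2ρ} (1 + (n+3) e^{-2ρ} + n e^{-4ρ}) / (1 - e^{-2ρ})^{n+3}. -/

import Mathlib

/-- `S n m ρ = Σ_{l=1}^∞ C(l+n-2, l) · l^m · e^{-2ρl}`. -/
noncomputable def S (n : ℕ) (m : ℤ) (ρ : ℝ) : ℝ :=
  ∑' l : ℕ, (Nat.choose (l + 1 + n - 2) (l + 1) : ℝ) * ((l : ℝ) + 1) ^ m *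
    Real.exp (-2 * ρ * ((l : ℝ) + 1))

/-- `C(ρ) = (2/(n-1)) S_{n,4}(ρ) + 3 S_{n,3}(ρ) + (n-1) S_{n,2}(ρ)`. -/
noncomputable def Cf (n : ℕ) (ρ : ℝ) : ℝ :=
  2 / ((n : ℝ) - 1) * S n 4 ρ + 3 * S n 3 ρ + ((n : ℝ) - 1) * S n 2 ρ

/-!
Put `x = e^{-2ρ}`. The absorption identity `(n - 1) C(l+n-1, l) = (l + n - 1) C(l+n-2, l)` turns
the three series making up `C(ρ)` into the single one `Σ C(l+n-1, l) l² (2l + n - 1) x^l`.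
The powers of `l` are then expanded in falling factorials, for which
`Σ C(l+k, k) l(l-1)⋯(l-j+1) x^l = (k+1)⋯(k+j) x^j / (1-x)^(k+j+1)`
is, up to a constant factor, a shifted negative binomial series.
-/

open Finset

theorem mul_descFactorial_eq_add (l j : ℕ) :
    l * l.descFactorial j = l.descFactorial (j + 1) + j * l.descFactorial j := by
  rw [Nat.descFactorial_succ, ← add_mul]
  rcases le_or_gt j l with hjl | hlj
  · rw [Nat.sub_add_cancel hjl]
  · simp only [Nat.descFactorial_of_lt hlj, mul_zero]

theorem pow_eq_sum_stirlingSecond_mul_descFactorial (l m : ℕ) :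
    l ^ m = ∑ j ∈ range (m + 1), m.stirlingSecond j * l.descFactorial j := by
  induction m with
  | zero => simp
  | succ m ih =>
    have shift : ∑ j ∈ range (m + 1), m.stirlingSecond j * (j * l.descFactorial j) =
        ∑ j ∈ range (m + 1), m.stirlingSecond (j + 1) * ((j + 1) * l.descFactorial (j + 1)) := by
      have h := sum_range_succ' (fun j ↦ m.stirlingSecond j * (j * l.descFactorial j)) (m + 1)
      rw [sum_range_succ, Nat.stirlingSecond_eq_zero_of_lt m.lt_succ_self] at h
      simpa using h
    calc l ^ (m + 1)
        = ∑ j ∈ range (m + 1), m.stirlingSecond j * (l * l.descFactorial j) := by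
          rw [pow_succ', ih, mul_sum]
          exact sum_congr rfl fun j _ ↦ mul_left_comm _ _ _
      _ = ∑ j ∈ range (m + 1), (m + 1).stirlingSecond (j + 1) * l.descFactorial (j + 1) := by
          simp only [mul_descFactorial_eq_add, mul_add, sum_add_distrib]
          rw [shift, ← sum_add_distrib]
          refine sum_congr rfl fun j _ ↦ ?_
          rw [Nat.stirlingSecond_succ_succ]
          ring
      _ = ∑ j ∈ range (m + 2), (m + 1).stirlingSecond j * l.descFactorial j := by
          rw [sum_range_succ' _ (m + 1), Nat.stirlingSecond_succ_zero, zero_mul, add_zero]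

theorem choose_mul_descFactorial_add (i j k : ℕ) :
    (i + j + k).choose k * (i + j).descFactorial j =
      (k + 1).ascFactorial j * (i + (k + j)).choose (k + j) := by
  have h := Nat.choose_mul (n := i + j + k) (Nat.le_add_right k j)
  rw [Nat.add_sub_cancel, Nat.add_sub_cancel_left, Nat.choose_symm_add] at h
  rw [Nat.descFactorial_eq_factorial_mul_choose, Nat.ascFactorial_eq_factorial_mul_choose,
    mul_left_comm, ← h, show i + (k + j) = i + j + k by ring]
  ring

section NegativeBinomialMoments

variable {𝕜 : Type*} [NormedField 𝕜] {r : 𝕜}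

theorem hasSum_choose_mul_descFactorial_mul_geometric (k j : ℕ) (hr : ‖r‖ < 1) :
    HasSum (fun l : ℕ ↦ ((l + k).choose k : 𝕜) * l.descFactorial j * r ^ l)
      ((k + 1).ascFactorial j * r ^ j / (1 - r) ^ (k + j + 1)) := by
  have initial_terms : ∑ l ∈ range j, ((l + k).choose k : 𝕜) * l.descFactorial j * r ^ l = 0 :=
    sum_eq_zero fun l hl ↦ by simp [Nat.descFactorial_of_lt (mem_range.mp hl)]
  rw [← hasSum_nat_add_iff' j, initial_terms, sub_zero]
  convert! (hasSum_choose_mul_geometric_of_norm_lt_one (k + j) hr).mul_left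
    ((k + 1).ascFactorial j * r ^ j) using 1
  · funext i
    have h := congrArg (Nat.cast (R := 𝕜)) (choose_mul_descFactorial_add i j k)
    push_cast at h
    rw [h]
    ring
  · ring

theorem hasSum_choose_mul_pow_mul_geometric (k m : ℕ) (hr : ‖r‖ < 1) :
    HasSum (fun l : ℕ ↦ ((l + k).choose k : 𝕜) * l ^ m * r ^ l)
      (∑ j ∈ range (m + 1), m.stirlingSecond j *
        ((k + 1).ascFactorial j * r ^ j / (1 - r) ^ (k + j + 1))) := by
  convert! hasSum_sum fun j (_ : j ∈ range (m + 1)) ↦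
    (hasSum_choose_mul_descFactorial_mul_geometric k j hr).mul_left (m.stirlingSecond j : 𝕜)
    using 1
  funext l
  rw [← Nat.cast_pow, pow_eq_sum_stirlingSecond_mul_descFactorial, Nat.cast_sum, mul_sum, sum_mul]
  refine sum_congr rfl fun j _ ↦ ?_
  push_cast
  ring

theorem hasSum_choose_mul_sq_mul_geometric (k : ℕ) (hr : ‖r‖ < 1) :
    HasSum (fun l : ℕ ↦ ((l + k).choose k : 𝕜) * l ^ 2 * r ^ l)
      ((k + 1) * r * (1 + (k + 1) * r) / (1 - r) ^ (k + 3)) := by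
  have one_sub_ne_zero := (isUnit_one_sub_of_norm_lt_one hr).ne_zero
  convert! hasSum_choose_mul_pow_mul_geometric k 2 hr using 1
  simp only [sum_range_succ, sum_range_zero, Nat.stirlingSecond, Nat.ascFactorial]
  push_cast
  field_simp
  ring

theorem hasSum_choose_mul_cube_mul_geometric (k : ℕ) (hr : ‖r‖ < 1) :
    HasSum (fun l : ℕ ↦ ((l + k).choose k : 𝕜) * l ^ 3 * r ^ l)
      ((k + 1) * r * (1 + (3 * k + 4) * r + (k + 1) ^ 2 * r ^ 2) / (1 - r) ^ (k + 4)) := by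
  have one_sub_ne_zero := (isUnit_one_sub_of_norm_lt_one hr).ne_zero
  convert! hasSum_choose_mul_pow_mul_geometric k 3 hr using 1
  simp only [sum_range_succ, sum_range_zero, Nat.stirlingSecond, Nat.ascFactorial]
  push_cast
  field_simp
  ring

theorem hasSum_choose_mul_sq_mul_linear_mul_geometric (k : ℕ) (hr : ‖r‖ < 1) :
    HasSum (fun l : ℕ ↦ ((l + k).choose k : 𝕜) * (l ^ 2 * (2 * l + k)) * r ^ l)
      ((k + 1) * (k + 2) * r * (1 + (k + 4) * r + (k + 1) * r ^ 2) / (1 - r) ^ (k + 4)) := by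
  have one_sub_ne_zero := (isUnit_one_sub_of_norm_lt_one hr).ne_zero
  convert! ((hasSum_choose_mul_cube_mul_geometric k hr).mul_left 2).add
    ((hasSum_choose_mul_sq_mul_geometric k hr).mul_left (k : 𝕜)) using 1
  · funext l
    ring
  · field_simp
    ring

end NegativeBinomialMoments

theorem norm_exp_neg_two_mul_lt_one {ρ : ℝ} (hρ : 0 < ρ) : ‖Real.exp (-2 * ρ)‖ < 1 := by
  rw [Real.norm_eq_abs, Real.abs_exp, Real.exp_lt_one_iff]
  linarith

theorem hasSum_S (k : ℕ) {m : ℕ} (hm : m ≠ 0) {ρ : ℝ} (hρ : 0 < ρ) :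
    HasSum (fun l : ℕ ↦ ((l + k).choose k : ℝ) * l ^ m * Real.exp (-2 * ρ) ^ l)
      (S (k + 2) m ρ) := by
  have summable_terms :=
    (hasSum_choose_mul_pow_mul_geometric k m (norm_exp_neg_two_mul_lt_one hρ)).summable
  convert! summable_terms.hasSum using 1
  rw [summable_terms.tsum_eq_zero_add, S]
  simp only [Nat.cast_zero, zero_pow hm, mul_zero, zero_mul, zero_add]
  refine tsum_congr fun l ↦ ?_
  rw [← Nat.add_assoc, Nat.add_sub_cancel, Nat.choose_symm_add, zpow_natCast, ← Real.exp_nat_mul]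
  push_cast
  ring_nf

theorem choose_mul_quartic_eq (k l : ℕ) :
    ((l + k).choose k : ℝ) * (2 / (k + 1) * l ^ 4 + 3 * l ^ 3 + (k + 1) * l ^ 2) =
      (l + (k + 1)).choose (k + 1) * (l ^ 2 * (2 * l + (k + 1))) := by
  have absorption : ((l : ℝ) + k + 1) * (l + k).choose k =
      (l + (k + 1)).choose (k + 1) * (k + 1) := by
    exact_mod_cast Nat.add_one_mul_choose_eq (l + k) k
  field_simp
  linear_combination (l : ℝ) ^ 2 * (2 * l + (k + 1)) * absorption

theorem hasSum_Cf (k : ℕ) {ρ : ℝ} (hρ : 0 < ρ) :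
    HasSum (fun l : ℕ ↦ ((l + (k + 1)).choose (k + 1) : ℝ) * (l ^ 2 * (2 * l + (k + 1))) *
      Real.exp (-2 * ρ) ^ l) (Cf (k + 2) ρ) := by
  convert! (((hasSum_S k four_ne_zero hρ).mul_left (2 / ((k : ℝ) + 1))).add
    ((hasSum_S k three_ne_zero hρ).mul_left 3)).add
    ((hasSum_S k two_ne_zero hρ).mul_left ((k : ℝ) + 1)) using 1
  · funext l
    rw [← choose_mul_quartic_eq]
    ring
  · rw [Cf, show ((k + 2 : ℕ) : ℝ) - 1 = k + 1 by push_cast; ring]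
    norm_cast

theorem stmt_5 (n : ℕ) (hn : 2 ≤ n) (ρ : ℝ) (hρ : 0 < ρ) :
    Cf n ρ = (n : ℝ) * ((n : ℝ) + 1) * Real.exp (-2 * ρ) *
      (1 + ((n : ℝ) + 3) * Real.exp (-2 * ρ) + (n : ℝ) * Real.exp (-4 * ρ)) /
      (1 - Real.exp (-2 * ρ)) ^ (n + 3) := by
  obtain ⟨k, rfl⟩ := Nat.exists_eq_add_of_le' hn
  have exp_neg_four_mul : Real.exp (-4 * ρ) = Real.exp (-2 * ρ) ^ 2 := by
    rw [← Real.exp_nat_mul]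
    ring_nf
  have closed_form := hasSum_choose_mul_sq_mul_linear_mul_geometric (k + 1)
    (norm_exp_neg_two_mul_lt_one hρ)
  push_cast at closed_form
  rw [(hasSum_Cf k hρ).unique closed_form, exp_neg_four_mul]
  push_cast
  ring
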